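/- arXiv:2212.12591 — 4 statements merged into one kernel-verified Lean document; each statement's English description precedes it below -/
import Mathlib

section
/- Let φ be a Lie algebra automorphism of I(X,K) which is a regular Hom-Lie structure on I(X,K). Then for all x < y < z in X one has [φ(e_{xy}), e_{yz}] = [e_{xz}, φ(e_z)] and [e_{xy}, φ(e_{yz})] = [φ(e_x), e_{xz}]. -/
open IncidenceAlgebra

attribute [local instance 100] LieRing.ofAssociativeRing

/-- The Hom-Jacobi identity for a map `φ` on a Lie ring. -/
def HomJacobi {A : Type*} [LieRing A] (φ : A → A) : Prop :=
  ∀ a b c : A, ⁅⁅a, b⁆, φ c⁆ + ⁅⁅b, c⁆, φ a⁆ + ⁅⁅c, a⁆, φ b⁆ = 0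

/-- `φ` is a regular Hom-Lie structure: a Lie algebra automorphism satisfying Hom-Jacobi. -/
def IsRegHomLie (K : Type*) {A : Type*} [CommRing K] [LieRing A] [LieAlgebra K A]
    (φ : A → A) : Prop :=
  (∃ e : A ≃ₗ⁅K⁆ A, ⇑e = φ) ∧ HomJacobi φ

/-- The "matrix unit" `e_{xy}` of the incidence algebra, for `x ≤ y`. -/
def eSingle (K : Type*) [Field K] {X : Type*} [PartialOrder X] [DecidableEq X]
    (x y : X) (_h : x ≤ y) : IncidenceAlgebra K X where
  toFun u v := if u = x ∧ v = y then 1 else 0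
  eq_zero_of_not_le' u v huv := by
    split_ifs with h'
    · exact absurd (by rw [h'.1, h'.2]; exact _h) huv
    · rfl

/-- The multiplicative map `M_σ` on the incidence algebra: `(M_σ f)(x,y) = σ(x,y) f(x,y)`. -/
def Mmul (K : Type*) [Field K] {X : Type*} [PartialOrder X]
    (σ : X → X → K) (f : IncidenceAlgebra K X) : IncidenceAlgebra K X where
  toFun u v := σ u v * f u v
  eq_zero_of_not_le' u v huv := by
    rw [apply_eq_zero_of_not_le huv f, mul_zero]

/-- The conjugation map `ξ_β : f ↦ β f β⁻¹`. -/
noncomputable def xiMap {K : Type*} [Field K] {X : Type*} [PartialOrder X] [DecidableEq X]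
    [LocallyFiniteOrder X] (β : IncidenceAlgebra K X) :
    IncidenceAlgebra K X → IncidenceAlgebra K X :=
  fun f => β * f * Ring.inverse β

/-- `l(x,y)`: the maximal length of a chain from `x` to `y`. -/
noncomputable def chainLen {X : Type*} [PartialOrder X] (x y : X) : ℕ :=
  sSup {n : ℕ | ∃ c : Fin (n + 1) → X, StrictMono c ∧ c 0 = x ∧ c (Fin.last n) = y}

/-- `J^m`: the `K`-span of the `e_{xy}` with `x < y` and `l(x,y) ≥ m`. -/
noncomputable def Jpow (K : Type*) [Field K] {X : Type*} [PartialOrder X] [DecidableEq X]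
    (m : ℕ) : Submodule K (IncidenceAlgebra K X) :=
  Submodule.span K {f | ∃ x y, ∃ h : x < y, m ≤ chainLen x y ∧ f = eSingle K x y h.le}

/-!
If `⁅c, a⁆ = 0`, the Hom-Jacobi identity for `a, b, c` reads `⁅φ a, ⁅b, c⁆⁆ = ⁅⁅a, b⁆, φ c⁆`.
The two equalities are the cases `(a, b, c) = (e_{xy}, e_{yz}, e_z)` and
`(a, b, c) = (e_x, e_{xy}, e_{yz})`.
-/

theorem HomJacobi.lie_map_lie_of_lie_eq_zero {L : Type*} [LieRing L] {φ : L → L} (hφ : HomJacobi φ)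
    {a c : L} (b : L) (hca : ⁅c, a⁆ = 0) : ⁅φ a, ⁅b, c⁆⁆ = ⁅⁅a, b⁆, φ c⁆ := by
  have hsum : ⁅⁅a, b⁆, φ c⁆ + ⁅⁅b, c⁆, φ a⁆ = 0 := by
    simpa only [hca, zero_lie, add_zero] using hφ a b c
  rw [eq_neg_of_add_eq_zero_left hsum, lie_skew]

section MatrixUnits

variable {K : Type*} [Field K] {X : Type*} [PartialOrder X] [DecidableEq X]

theorem eSingle_apply {x y : X} (hxy : x ≤ y) (u v : X) :
    eSingle K x y hxy u v = if u = x ∧ v = y then 1 else 0 :=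
  rfl

variable [LocallyFiniteOrder X]

theorem eSingle_mul_eSingle {x y z : X} (hxy : x ≤ y) (hyz : y ≤ z) :
    eSingle K x y hxy * eSingle K y z hyz = eSingle K x z (hxy.trans hyz) := by
  ext u v
  simp only [mul_apply, eSingle_apply]
  by_cases huv : u = x ∧ v = z
  · obtain ⟨rfl, rfl⟩ := huv
    simp [hxy, hyz]
  · rw [if_neg huv]
    exact Finset.sum_eq_zero fun w _ => by grind

theorem eSingle_mul_eSingle_of_ne {x y u v : X} (hxy : x ≤ y) (huv : u ≤ v) (hyu : y ≠ u) :
    eSingle K x y hxy * eSingle K u v huv = 0 := by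
  ext s t
  simp only [mul_apply, eSingle_apply, IncidenceAlgebra.zero_apply]
  exact Finset.sum_eq_zero fun w _ => by grind

theorem lie_eSingle_eSingle {x y z : X} (hxy : x ≤ y) (hyz : y ≤ z) (hne : x ≠ z) :
    ⁅eSingle K x y hxy, eSingle K y z hyz⁆ = eSingle K x z (hxy.trans hyz) := by
  rw [Ring.lie_def, eSingle_mul_eSingle, eSingle_mul_eSingle_of_ne _ _ hne.symm, sub_zero]

theorem lie_eSingle_eSingle_eq_zero {x y u v : X} (hxy : x ≤ y) (huv : u ≤ v)
    (hyu : y ≠ u) (hvx : v ≠ x) : ⁅eSingle K x y hxy, eSingle K u v huv⁆ = 0 := by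
  rw [Ring.lie_def, eSingle_mul_eSingle_of_ne _ _ hyu, eSingle_mul_eSingle_of_ne _ _ hvx, sub_zero]

end MatrixUnits

theorem stmt1_general {K : Type*} [Field K] {X : Type*} [PartialOrder X] [DecidableEq X]
    [LocallyFiniteOrder X] {φ : IncidenceAlgebra K X → IncidenceAlgebra K X} (hφ : HomJacobi φ)
    {x y z : X} (hxy : x < y) (hyz : y < z) :
    ⁅φ (eSingle K x y hxy.le), eSingle K y z hyz.le⁆ =
      ⁅eSingle K x z (hxy.le.trans hyz.le), φ (eSingle K z z le_rfl)⁆ ∧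
    ⁅eSingle K x y hxy.le, φ (eSingle K y z hyz.le)⁆ =
      ⁅φ (eSingle K x x le_rfl), eSingle K x z (hxy.le.trans hyz.le)⁆ := by
  have hxz : x < z := hxy.trans hyz
  have lie_xy_yz :
      ⁅eSingle K x y hxy.le, eSingle K y z hyz.le⁆ = eSingle K x z hxz.le :=
    lie_eSingle_eSingle hxy.le hyz.le hxz.ne
  constructor
  · have lie_z_xy : ⁅eSingle K z z le_rfl, eSingle K x y hxy.le⁆ = 0 :=
      lie_eSingle_eSingle_eq_zero le_rfl hxy.le hxz.ne' hyz.ne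
    have lie_yz_z : ⁅eSingle K y z hyz.le, eSingle K z z le_rfl⁆ = eSingle K y z hyz.le :=
      lie_eSingle_eSingle hyz.le le_rfl hyz.ne
    simpa only [lie_xy_yz, lie_yz_z] using
      hφ.lie_map_lie_of_lie_eq_zero (eSingle K y z hyz.le) lie_z_xy
  · have lie_yz_x : ⁅eSingle K y z hyz.le, eSingle K x x le_rfl⁆ = 0 :=
      lie_eSingle_eSingle_eq_zero hyz.le le_rfl hxz.ne' hxy.ne
    have lie_x_xy : ⁅eSingle K x x le_rfl, eSingle K x y hxy.le⁆ = eSingle K x y hxy.le :=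
      lie_eSingle_eSingle le_rfl hxy.le hxy.ne
    simpa only [lie_xy_yz, lie_x_xy] using
      (hφ.lie_map_lie_of_lie_eq_zero (eSingle K x y hxy.le) lie_yz_x).symm

theorem stmt1 {K : Type*} [Field K] {X : Type*} [PartialOrder X] [Fintype X] [DecidableEq X]
    [LocallyFiniteOrder X]
    (hcard : 1 < Fintype.card X)
    (hconn : ∀ x y : X, Relation.ReflTransGen (fun a b : X => a ≤ b ∨ b ≤ a) x y)
    (φ : IncidenceAlgebra K X ≃ₗ⁅K⁆ IncidenceAlgebra K X) (hφ : HomJacobi ⇑φ)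
    {x y z : X} (hxy : x < y) (hyz : y < z) :
    ⁅φ (eSingle K x y hxy.le), eSingle K y z hyz.le⁆ =
      ⁅eSingle K x z (hxy.le.trans hyz.le), φ (eSingle K z z le_rfl)⁆ ∧
    ⁅eSingle K x y hxy.le, φ (eSingle K y z hyz.le)⁆ =
      ⁅φ (eSingle K x x le_rfl), eSingle K x z (hxy.le.trans hyz.le)⁆ :=
  stmt1_general hφ hxy hyz
end

section
/- Let σ : {(x,y) ∈ X² : x≤y} → K∖{0} be multiplicative with σ(x,y) = 1 for every x < y such that x ∉ Min(X) or y ∉ Max(X), and let ν : I(X,K) → I(X,K) be a K-linear map all of whose values are scalar multiples of δ and which vanishes on J(I(X,K)). If the map φ := M_σ + ν is bijective, then φ is a regular Hom-Lie structure on I(X,K). -/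
open IncidenceAlgebra

attribute [local instance 100] LieRing.ofAssociativeRing

/-!
Modulo the central map `ν`, which brackets do not see, `φ` is the algebra endomorphism `M_σ`, and
`ν` kills brackets because these lie in the radical; so `φ` preserves brackets. For Hom-Jacobi it
suffices that `φ c - c` commutes with every bracket `g`, as the identity then becomes the ordinary
Jacobi identity. Since `ν c` is central, this says `[g, M_σ c] = [g, c]`. In
`(g * M_σ c)(x,y) = ∑ g(x,z) σ(z,y) c(z,y)` the terms with `g(x,z) ≠ 0` have `x < z`, so `z` is
not minimal and `σ(z,y) = 1`; dually for `M_σ c * g`.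
-/

section HomLie

theorem homJacobi_of_lie_lie_apply_eq {L : Type*} [LieRing L] {φ : L → L}
    (hφ : ∀ a b c : L, ⁅⁅a, b⁆, φ c⁆ = ⁅⁅a, b⁆, c⁆) : HomJacobi φ := fun a b c =>
  calc ⁅⁅a, b⁆, φ c⁆ + ⁅⁅b, c⁆, φ a⁆ + ⁅⁅c, a⁆, φ b⁆
      = ⁅⁅a, b⁆, c⁆ + ⁅⁅b, c⁆, a⁆ + ⁅⁅c, a⁆, b⁆ := by rw [hφ, hφ, hφ]
    _ = -(⁅a, ⁅b, c⁆⁆ + ⁅b, ⁅c, a⁆⁆ + ⁅c, ⁅a, b⁆⁆) := by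
      rw [← lie_skew ⁅a, b⁆ c, ← lie_skew ⁅b, c⁆ a, ← lie_skew ⁅c, a⁆ b]
      abel
    _ = 0 := by rw [lie_jacobi, neg_zero]

variable {R L : Type*} [CommRing R] [LieRing L] [LieAlgebra R L]

/-- The perturbation of a Lie algebra endomorphism `ψ` by a linear map `ν` with central values that
vanishes on brackets, as a Lie algebra endomorphism. -/
def addCentral (ψ : L →ₗ⁅R⁆ L) (ν : L →ₗ[R] L) (hν : ∀ a, ν a ∈ LieAlgebra.center R L)
    (hν_lie : ∀ a b : L, ν ⁅a, b⁆ = 0) : L →ₗ⁅R⁆ L where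
  toLinearMap := (ψ : L →ₗ[R] L) + ν
  map_lie' {a b} := by
    have lie_ν (x y : L) : ⁅x, ν y⁆ = 0 := hν y x
    have ν_lie (x y : L) : ⁅ν x, y⁆ = 0 := by rw [← lie_skew, lie_ν, neg_zero]
    simp [hν_lie, lie_ν, ν_lie]

theorem isRegHomLie_add_of_mem_center (ψ : L →ₗ⁅R⁆ L) (ν : L →ₗ[R] L)
    (hψ : ∀ a b c : L, ⁅⁅a, b⁆, ψ c⁆ = ⁅⁅a, b⁆, c⁆)
    (hν : ∀ a, ν a ∈ LieAlgebra.center R L) (hν_lie : ∀ a b : L, ν ⁅a, b⁆ = 0)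
    (hbij : Function.Bijective fun a => ψ a + ν a) :
    IsRegHomLie R fun a => ψ a + ν a := by
  refine ⟨⟨LieEquiv.ofBijective (addCentral ψ ν hν hν_lie) hbij, rfl⟩,
    homJacobi_of_lie_lie_apply_eq fun a b c => ?_⟩
  have lie_ν : ⁅⁅a, b⁆, ν c⁆ = 0 := hν c ⁅a, b⁆
  rw [lie_add, hψ, lie_ν, add_zero]

theorem smul_one_mem_lieCenter {A : Type*} [Ring A] [Algebra R A] (c : R) :
    c • (1 : A) ∈ LieAlgebra.center R A := fun a =>
  commute_iff_lie_eq.mp ((Commute.one_right a).smul_right c)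

end HomLie

/-- The linear map `f ↦ σ f` multiplying the entries of `f` by those of an arbitrary `σ`. -/
def entrywiseMul {R X : Type*} [CommSemiring R] [Preorder X] (σ : X → X → R) :
    IncidenceAlgebra R X →ₗ[R] IncidenceAlgebra R X where
  toFun f := ⟨fun x y => σ x y * f x y, fun x y hxy => by
    rw [apply_eq_zero_of_not_le hxy f, mul_zero]⟩
  map_add' f g := by
    ext x y
    exact mul_add (σ x y) (f x y) (g x y)
  map_smul' c f := by
    ext x y
    exact mul_left_comm (σ x y) c (f x y)

theorem entrywiseMul_apply {R X : Type*} [CommSemiring R] [Preorder X] (σ : X → X → R)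
    (f : IncidenceAlgebra R X) (x y : X) : entrywiseMul σ f x y = σ x y * f x y := rfl

/-- A multiplicative weight on a preorder: a function `σ` on pairs with `σ(x,x) = 1` and
`σ(x,z) = σ(x,y) σ(y,z)` for `x ≤ y ≤ z`. Values at pairs with `x ≰ y` are irrelevant, and values
at `x < y` may vanish. -/
structure IsMultiplicativeWeight {R X : Type*} [MulOneClass R] [Preorder X]
    (σ : X → X → R) : Prop where
  self_eq_one (x : X) : σ x x = 1
  mul_eq {x y z : X} : x ≤ y → y ≤ z → σ x z = σ x y * σ y z

namespace IsMultiplicativeWeight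

theorem of_self_ne_zero {R X : Type*} [MonoidWithZero R] [IsLeftCancelMulZero R] [Preorder X]
    {σ : X → X → R} (hσ : ∀ x, σ x x ≠ 0)
    (hmul : ∀ x y z, x ≤ y → y ≤ z → σ x z = σ x y * σ y z) : IsMultiplicativeWeight σ where
  self_eq_one x := (mul_eq_left₀ (hσ x)).mp (hmul x x x le_rfl le_rfl).symm
  mul_eq := hmul _ _ _

section Preorder

variable {R X : Type*} [CommSemiring R] [Preorder X] {σ : X → X → R}

theorem entrywiseMul_one [DecidableEq X] (hσ : IsMultiplicativeWeight σ) :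
    entrywiseMul σ (1 : IncidenceAlgebra R X) = 1 := by
  ext x y
  rw [entrywiseMul_apply, one_apply]
  split_ifs with hxy
  · rw [hxy, hσ.self_eq_one, mul_one]
  · rw [mul_zero]

theorem entrywiseMul_mul [LocallyFiniteOrder X] (hσ : IsMultiplicativeWeight σ)
    (f g : IncidenceAlgebra R X) :
    entrywiseMul σ (f * g) = entrywiseMul σ f * entrywiseMul σ g := by
  ext x y
  rw [entrywiseMul_apply, mul_apply, mul_apply, Finset.mul_sum]
  refine Finset.sum_congr rfl fun z hz => ?_
  obtain ⟨hxz, hzy⟩ := Finset.mem_Icc.mp hz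
  rw [entrywiseMul_apply, entrywiseMul_apply, hσ.mul_eq hxz hzy, mul_mul_mul_comm]

end Preorder

section PartialOrder

variable {R X : Type*} [CommSemiring R] [PartialOrder X] [LocallyFiniteOrder X] [DecidableEq X]
  {σ : X → X → R}

/-- The multiplicative endomorphism `M_σ : f ↦ σ f` of the incidence algebra. It agrees with `Mmul`
but is defined over any commutative semiring. -/
def algHom (hσ : IsMultiplicativeWeight σ) : IncidenceAlgebra R X →ₐ[R] IncidenceAlgebra R X :=
  AlgHom.ofLinearMap (entrywiseMul σ) hσ.entrywiseMul_one hσ.entrywiseMul_mul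

theorem algHom_apply (hσ : IsMultiplicativeWeight σ) (f : IncidenceAlgebra R X) (x y : X) :
    hσ.algHom f x y = σ x y * f x y := rfl

theorem mul_algHom_of_diag_eq_zero (hσ : IsMultiplicativeWeight σ)
    (hσ_min : ∀ x y, x < y → ¬IsMin x → σ x y = 1) {g : IncidenceAlgebra R X}
    (hg : ∀ x, g x x = 0) (f : IncidenceAlgebra R X) : g * hσ.algHom f = g * f := by
  ext x y
  rw [mul_apply, mul_apply]
  refine Finset.sum_congr rfl fun z hz => ?_
  obtain ⟨hxz, hzy⟩ := Finset.mem_Icc.mp hz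
  rcases hxz.eq_or_lt with rfl | hxz
  · rw [hg, zero_mul, zero_mul]
  · have hσzy : σ z y = 1 := by
      rcases hzy.eq_or_lt with rfl | hzy
      · exact hσ.self_eq_one z
      · exact hσ_min z y hzy hxz.not_isMin
    rw [algHom_apply, hσzy, one_mul]

theorem algHom_mul_of_diag_eq_zero (hσ : IsMultiplicativeWeight σ)
    (hσ_max : ∀ x y, x < y → ¬IsMax y → σ x y = 1) {g : IncidenceAlgebra R X}
    (hg : ∀ x, g x x = 0) (f : IncidenceAlgebra R X) : hσ.algHom f * g = f * g := by
  ext x y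
  rw [mul_apply, mul_apply]
  refine Finset.sum_congr rfl fun z hz => ?_
  obtain ⟨hxz, hzy⟩ := Finset.mem_Icc.mp hz
  rcases hzy.eq_or_lt with rfl | hzy
  · rw [hg, mul_zero, mul_zero]
  · have hσxz : σ x z = 1 := by
      rcases hxz.eq_or_lt with rfl | hxz
      · exact hσ.self_eq_one x
      · exact hσ_max x z hxz hzy.not_isMax
    rw [algHom_apply, hσxz, one_mul]

end PartialOrder

theorem lie_algHom_of_diag_eq_zero {R X : Type*} [CommRing R] [PartialOrder X]
    [LocallyFiniteOrder X] [DecidableEq X] {σ : X → X → R} (hσ : IsMultiplicativeWeight σ)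
    (hσ_one : ∀ x y, x < y → (¬IsMin x ∨ ¬IsMax y) → σ x y = 1) {g : IncidenceAlgebra R X}
    (hg : ∀ x, g x x = 0) (f : IncidenceAlgebra R X) : ⁅g, hσ.algHom f⁆ = ⁅g, f⁆ := by
  rw [LieRing.of_associative_ring_bracket, LieRing.of_associative_ring_bracket,
    hσ.mul_algHom_of_diag_eq_zero (fun x y hxy hx => hσ_one x y hxy (.inl hx)) hg,
    hσ.algHom_mul_of_diag_eq_zero (fun x y hxy hy => hσ_one x y hxy (.inr hy)) hg]

end IsMultiplicativeWeight

theorem lie_apply_self {R X : Type*} [CommRing R] [PartialOrder X] [LocallyFiniteOrder X]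
    [DecidableEq X] (f g : IncidenceAlgebra R X) (x : X) : ⁅f, g⁆ x x = 0 := by
  rw [LieRing.of_associative_ring_bracket, IncidenceAlgebra.sub_apply, mul_apply, mul_apply,
    Finset.Icc_self, Finset.sum_singleton, Finset.sum_singleton, mul_comm, sub_self]

theorem stmt4_general {R X : Type*} [CommRing R] [PartialOrder X] [LocallyFiniteOrder X]
    [DecidableEq X] {σ : X → X → R} (hσ : IsMultiplicativeWeight σ)
    (hσ_one : ∀ x y, x < y → (¬IsMin x ∨ ¬IsMax y) → σ x y = 1)
    (ν : IncidenceAlgebra R X →ₗ[R] IncidenceAlgebra R X)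
    (hν_center : ∀ f, ν f ∈ LieAlgebra.center R (IncidenceAlgebra R X))
    (hν_radical : ∀ f : IncidenceAlgebra R X, (∀ x, f x x = 0) → ν f = 0)
    (hbij : Function.Bijective fun f => hσ.algHom f + ν f) :
    IsRegHomLie R fun f => hσ.algHom f + ν f :=
  isRegHomLie_add_of_mem_center hσ.algHom.toLieHom ν
    (fun f g => hσ.lie_algHom_of_diag_eq_zero hσ_one (lie_apply_self f g)) hν_center
    (fun f g => hν_radical _ (lie_apply_self f g)) hbij

theorem stmt4 {K : Type*} [Field K] {X : Type*} [PartialOrder X] [Fintype X] [DecidableEq X]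
    [LocallyFiniteOrder X]
    (hcard : 1 < Fintype.card X)
    (hconn : ∀ x y : X, Relation.ReflTransGen (fun a b : X => a ≤ b ∨ b ≤ a) x y)
    (σ : X → X → K)
    (hσ0 : ∀ x y : X, x ≤ y → σ x y ≠ 0)
    (hσm : ∀ x y z : X, x ≤ y → y ≤ z → σ x z = σ x y * σ y z)
    (hσ1 : ∀ x y : X, x < y → (¬IsMin x ∨ ¬IsMax y) → σ x y = 1)
    (ν : IncidenceAlgebra K X →ₗ[K] IncidenceAlgebra K X)
    (hν1 : ∀ f, ∃ c : K, ν f = c • (1 : IncidenceAlgebra K X))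
    (hν2 : ∀ f : IncidenceAlgebra K X, (∀ x, f x x = 0) → ν f = 0)
    (hbij : Function.Bijective fun f => Mmul K σ f + ν f) :
    IsRegHomLie K (fun f => Mmul K σ f + ν f) :=
  stmt4_general (.of_self_ne_zero (fun x => hσ0 x x le_rfl) hσm) hσ1 ν
    (fun f => (hν1 f).elim fun c hc => hc ▸ smul_one_mem_lieCenter c) hν2 hbij
end

section
/- Let β = δ + ρ with ρ ∈ J(I(X,K)), let σ : {(x,y) ∈ X² : x≤y} → K∖{0} be multiplicative with σ(x,y) = 1 for every x < y such that x ∉ Min(X) or y ∉ Max(X), and let ν : I(X,K) → I(X,K) be a K-linear map all of whose values are scalar multiples of δ and which vanishes on J(I(X,K)), such that M_σ + ν is bijective. Then the Lie automorphism φ := ξ_β ∘ (M_σ + ν) is a regular Hom-Lie structure on I(X,K) if and only if ξ_β is a regular Hom-Lie structure on I(X,K). -/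
open IncidenceAlgebra

attribute [local instance 100] LieRing.ofAssociativeRing

/-! Put `T = M_σ + ν`. The difference `M_σ c - c` is supported on pairs (minimal, maximal), so it
annihilates the Jacobson radical on both sides; the latter contains all commutators, and `ν c` is
central, so `⁅⁅a, b⁆, T c⁆ = ⁅⁅a, b⁆, c⁆`. Any Lie automorphism `ψ` transports this identity to
`⁅⁅a, b⁆, ψ (T c)⁆ = ⁅⁅a, b⁆, ψ c⁆`, because every `⁅a, b⁆` is the image under `ψ` of a commutator.
Hence `ψ ∘ T` and `ψ` satisfy the Hom-Jacobi identity simultaneously, and as `T` is itself a Lie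
automorphism, `ψ ∘ T` is one exactly when `ψ` is.
-/

section LieAlgebra

variable {K A : Type*} [CommRing K] [LieRing A] [LieAlgebra K A]

/-- The sum of a Lie algebra homomorphism and a linear map with central values that vanishes on
brackets, as a Lie algebra homomorphism; this is the shape of `M_σ + ν`. -/
def lieHomAddCentral {B : Type*} [LieRing B] [LieAlgebra K B] (S : A →ₗ⁅K⁆ B) (ν : A →ₗ[K] B)
    (hν_center : ∀ a, ν a ∈ LieAlgebra.center K B) (hν_lie : ∀ a b : A, ν ⁅a, b⁆ = 0) :
    A →ₗ⁅K⁆ B where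
  toLinearMap := S + ν
  map_lie' {a b} := by
    have lie_ν (y : B) (x : A) : ⁅y, ν x⁆ = 0 := hν_center x y
    have ν_lie (x : A) (y : B) : ⁅ν x, y⁆ = 0 := by rw [← lie_skew, lie_ν, neg_zero]
    simp [lie_ν, ν_lie, hν_lie]

theorem exists_lieEquiv_coe_eq_comp_iff (T : A ≃ₗ⁅K⁆ A) (ψ : A → A) :
    (∃ e : A ≃ₗ⁅K⁆ A, ⇑e = ψ ∘ T) ↔ ∃ e : A ≃ₗ⁅K⁆ A, ⇑e = ψ := by
  constructor
  · rintro ⟨e, he⟩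
    refine ⟨T.symm.trans e, funext fun a => ?_⟩
    simpa using congrFun he (T.symm a)
  · rintro ⟨e, rfl⟩
    exact ⟨T.trans e, rfl⟩

theorem homJacobi_lieEquiv_comp_iff (e : A ≃ₗ⁅K⁆ A) {T : A → A}
    (hT : ∀ a b c : A, ⁅⁅a, b⁆, T c⁆ = ⁅⁅a, b⁆, c⁆) :
    HomJacobi (e ∘ T) ↔ HomJacobi e := by
  have lie_lie_comp (a b c : A) : ⁅⁅a, b⁆, e (T c)⁆ = ⁅⁅a, b⁆, e c⁆ := by
    obtain ⟨a, rfl⟩ := e.surjective a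
    obtain ⟨b, rfl⟩ := e.surjective b
    calc ⁅⁅e a, e b⁆, e (T c)⁆ = e ⁅⁅a, b⁆, T c⁆ := by simp only [LieEquiv.map_lie]
      _ = e ⁅⁅a, b⁆, c⁆ := by rw [hT]
      _ = ⁅⁅e a, e b⁆, e c⁆ := by simp only [LieEquiv.map_lie]
  simp only [HomJacobi, Function.comp_apply, lie_lie_comp]

theorem isRegHomLie_comp_lieEquiv_iff (T : A ≃ₗ⁅K⁆ A)
    (hT : ∀ a b c : A, ⁅⁅a, b⁆, T c⁆ = ⁅⁅a, b⁆, c⁆) (ψ : A → A) :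
    IsRegHomLie K (ψ ∘ T) ↔ IsRegHomLie K ψ := by
  rw [IsRegHomLie, IsRegHomLie, exists_lieEquiv_coe_eq_comp_iff T]
  refine and_congr_right ?_
  rintro ⟨e, rfl⟩
  exact homJacobi_lieEquiv_comp_iff e hT

end LieAlgebra

theorem smul_one_mem_lieAlgebra_center {R A : Type*} [CommRing R] [Ring A] [Algebra R A] (r : R) :
    r • (1 : A) ∈ LieAlgebra.center R A :=
  fun a => by simp [LieRing.of_associative_ring_bracket]

section MulEqZero

variable {R X : Type*} [NonUnitalNonAssocSemiring R] [PartialOrder X] [LocallyFiniteOrder X]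
  {f g : IncidenceAlgebra R X}

theorem incidenceAlgebra_mul_eq_zero_of_isMin (hf : ∀ x, f x x = 0)
    (hg : ∀ x y, g x y ≠ 0 → IsMin x) : f * g = 0 := by
  ext u v _
  rw [IncidenceAlgebra.mul_apply, IncidenceAlgebra.zero_apply]
  refine Finset.sum_eq_zero fun z hz => ?_
  by_cases hzv : g z v = 0
  · rw [hzv, mul_zero]
  · rw [(hg z v hzv).eq_of_le (Finset.mem_Icc.1 hz).1, hf, zero_mul]

theorem incidenceAlgebra_mul_eq_zero_of_isMax (hf : ∀ x, f x x = 0)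
    (hg : ∀ x y, g x y ≠ 0 → IsMax y) : g * f = 0 := by
  ext u v _
  rw [IncidenceAlgebra.mul_apply, IncidenceAlgebra.zero_apply]
  refine Finset.sum_eq_zero fun z hz => ?_
  by_cases huz : g u z = 0
  · rw [huz, zero_mul]
  · rw [← (hg u z huz).eq_of_le (Finset.mem_Icc.1 hz).2, hf, mul_zero]

end MulEqZero

section Lie

variable {R X : Type*} [CommRing R] [PartialOrder X] [DecidableEq X] [LocallyFiniteOrder X]

theorem incidenceAlgebra_lie_apply_self (f g : IncidenceAlgebra R X) (x : X) :
    ⁅f, g⁆ x x = 0 := by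
  simp [LieRing.of_associative_ring_bracket, mul_comm]

theorem incidenceAlgebra_lie_lie_eq_zero {g : IncidenceAlgebra R X}
    (hg : ∀ x y, g x y ≠ 0 → IsMin x ∧ IsMax y) (a b : IncidenceAlgebra R X) :
    ⁅⁅a, b⁆, g⁆ = 0 := by
  have hab := incidenceAlgebra_lie_apply_self a b
  rw [LieRing.of_associative_ring_bracket ⁅a, b⁆,
    incidenceAlgebra_mul_eq_zero_of_isMin hab fun x y h => (hg x y h).1,
    incidenceAlgebra_mul_eq_zero_of_isMax hab fun x y h => (hg x y h).2, sub_zero]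

end Lie

section Multiplicative

variable {K X : Type*} [Field K] [PartialOrder X] {σ : X → X → K}

@[simp]
theorem mmul_apply (f : IncidenceAlgebra K X) (x y : X) : Mmul K σ f x y = σ x y * f x y :=
  rfl

theorem isMin_and_isMax_of_mmul_sub_apply_ne_zero (hσ_self : ∀ x, σ x x = 1)
    (hσ1 : ∀ x y : X, x < y → (¬IsMin x ∨ ¬IsMax y) → σ x y = 1)
    (f : IncidenceAlgebra K X) (x y : X) (hxy : (Mmul K σ f - f) x y ≠ 0) :
    IsMin x ∧ IsMax y := by
  contrapose! hxy
  rw [IncidenceAlgebra.sub_apply, mmul_apply, sub_eq_zero]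
  by_cases hle : x ≤ y
  · have hσxy : σ x y = 1 := by
      obtain rfl | hlt := hle.eq_or_lt
      · exact hσ_self x
      · exact hσ1 x y hlt (not_and_or.1 (not_and.2 hxy))
    rw [hσxy, one_mul]
  · rw [apply_eq_zero_of_not_le hle f, mul_zero]

theorem mmul_mul [LocallyFiniteOrder X]
    (hσm : ∀ x y z : X, x ≤ y → y ≤ z → σ x z = σ x y * σ y z) (f g : IncidenceAlgebra K X) :
    Mmul K σ (f * g) = Mmul K σ f * Mmul K σ g := by
  ext x y
  simp only [mmul_apply, IncidenceAlgebra.mul_apply, Finset.mul_sum]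
  refine Finset.sum_congr rfl fun z hz => ?_
  obtain ⟨hxz, hzy⟩ := Finset.mem_Icc.1 hz
  rw [hσm x z y hxz hzy, mul_mul_mul_comm]

variable [DecidableEq X]

theorem mmul_one (hσ_self : ∀ x, σ x x = 1) : Mmul K σ 1 = 1 := by
  ext x y
  obtain rfl | hxy := eq_or_ne x y
  · simp [hσ_self]
  · simp [IncidenceAlgebra.one_apply, hxy]

variable [LocallyFiniteOrder X]

/-- The multiplicative endomorphism `M_σ` as an algebra homomorphism; `σ` may take the value `0`
off the diagonal, so it need not be bijective. -/
def mmulAlgHom (hσ_self : ∀ x, σ x x = 1)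
    (hσm : ∀ x y z : X, x ≤ y → y ≤ z → σ x z = σ x y * σ y z) :
    IncidenceAlgebra K X →ₐ[K] IncidenceAlgebra K X :=
  AlgHom.ofLinearMap
    { toFun := Mmul K σ
      map_add' := fun f g => by ext; simp [mul_add]
      map_smul' := fun c f => by
        ext x y
        exact mul_left_comm (σ x y) c (f x y) }
    (mmul_one hσ_self) (mmul_mul hσm)

theorem lie_lie_mmul (hσ_self : ∀ x, σ x x = 1)
    (hσ1 : ∀ x y : X, x < y → (¬IsMin x ∨ ¬IsMax y) → σ x y = 1)
    (a b c : IncidenceAlgebra K X) : ⁅⁅a, b⁆, Mmul K σ c⁆ = ⁅⁅a, b⁆, c⁆ := by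
  rw [← sub_eq_zero, ← lie_sub]
  exact incidenceAlgebra_lie_lie_eq_zero
    (isMin_and_isMax_of_mmul_sub_apply_ne_zero hσ_self hσ1 c) a b

end Multiplicative

theorem stmt7_general {K : Type*} [Field K] {X : Type*} [PartialOrder X] [DecidableEq X]
    [LocallyFiniteOrder X] (ψ : IncidenceAlgebra K X → IncidenceAlgebra K X)
    (σ : X → X → K)
    (hσ0 : ∀ x y : X, x ≤ y → σ x y ≠ 0)
    (hσm : ∀ x y z : X, x ≤ y → y ≤ z → σ x z = σ x y * σ y z)
    (hσ1 : ∀ x y : X, x < y → (¬IsMin x ∨ ¬IsMax y) → σ x y = 1)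
    (ν : IncidenceAlgebra K X →ₗ[K] IncidenceAlgebra K X)
    (hν1 : ∀ f, ν f ∈ LieAlgebra.center K (IncidenceAlgebra K X))
    (hν2 : ∀ f : IncidenceAlgebra K X, (∀ x, f x x = 0) → ν f = 0)
    (hbij : Function.Bijective fun f => Mmul K σ f + ν f) :
    IsRegHomLie K (fun f => ψ (Mmul K σ f + ν f)) ↔ IsRegHomLie K ψ := by
  have hσ_self (x : X) : σ x x = 1 :=
    (mul_eq_left₀ (hσ0 x x le_rfl)).1 (hσm x x x le_rfl le_rfl).symm
  have hν_lie (a b : IncidenceAlgebra K X) : ν ⁅a, b⁆ = 0 :=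
    hν2 _ (incidenceAlgebra_lie_apply_self a b)
  let T : IncidenceAlgebra K X ≃ₗ⁅K⁆ IncidenceAlgebra K X :=
    LieEquiv.ofBijective
      (lieHomAddCentral (mmulAlgHom hσ_self hσm).toLieHom ν hν1 hν_lie) hbij
  refine isRegHomLie_comp_lieEquiv_iff T (fun a b c => ?_) ψ
  calc ⁅⁅a, b⁆, Mmul K σ c + ν c⁆ = ⁅⁅a, b⁆, Mmul K σ c⁆ := by
        rw [lie_add, hν1 c ⁅a, b⁆, add_zero]
    _ = ⁅⁅a, b⁆, c⁆ := lie_lie_mmul hσ_self hσ1 a b c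

theorem stmt7 {K : Type*} [Field K] {X : Type*} [PartialOrder X] [Fintype X] [DecidableEq X]
    [LocallyFiniteOrder X]
    (hcard : 1 < Fintype.card X)
    (hconn : ∀ x y : X, Relation.ReflTransGen (fun a b : X => a ≤ b ∨ b ≤ a) x y)
    (ρ : IncidenceAlgebra K X) (hρ : ∀ x : X, ρ x x = 0)
    (σ : X → X → K)
    (hσ0 : ∀ x y : X, x ≤ y → σ x y ≠ 0)
    (hσm : ∀ x y z : X, x ≤ y → y ≤ z → σ x z = σ x y * σ y z)
    (hσ1 : ∀ x y : X, x < y → (¬IsMin x ∨ ¬IsMax y) → σ x y = 1)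
    (ν : IncidenceAlgebra K X →ₗ[K] IncidenceAlgebra K X)
    (hν1 : ∀ f, ∃ c : K, ν f = c • (1 : IncidenceAlgebra K X))
    (hν2 : ∀ f : IncidenceAlgebra K X, (∀ x, f x x = 0) → ν f = 0)
    (hbij : Function.Bijective fun f => Mmul K σ f + ν f) :
    IsRegHomLie K (fun f => xiMap (1 + ρ) (Mmul K σ f + ν f)) ↔
      IsRegHomLie K (xiMap (1 + ρ)) := by
  refine stmt7_general _ σ hσ0 hσm hσ1 ν (fun f => ?_) hν2 hbij
  obtain ⟨c, hc⟩ := hν1 f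
  exact hc ▸ smul_one_mem_lieAlgebra_center c
end

section
/- Suppose X has length 1, i.e., X contains no chain x < y < z. Then for every unit β of I(X,K) and every multiplicative map σ : {(x,y) ∈ X² : x≤y} → K∖{0} there exist a unit β' of I(X,K) with β'(x,x) = 1 for all x ∈ X and a multiplicative map σ' such that ξ_β ∘ M_σ = ξ_{β'} ∘ M_{σ'}. Explicitly, writing β = ε + ρ with ε the diagonal part and ρ ∈ J(I(X,K)), one may take σ'(x,y) = ε(x,x)ε(y,y)⁻¹σ(x,y) for x < y and β' = δ + ρε⁻¹. -/
open IncidenceAlgebra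

/- Write `ε` for the diagonal part of `β`, so that `β = β' ε` with `β' = β ε⁻¹` of diagonal `1`.
Conjugation by the diagonal unit `ε` scales the `(x, y)` entry by `ε(x,x) ε(y,y)⁻¹`, so `ξ_ε` is
itself a multiplicative automorphism and `ξ_β ∘ M_σ = ξ_{β'} ∘ (ξ_ε ∘ M_σ)` has the required
form. -/

section Multiplicative

variable {X M : Type*}

/-- A multiplicative map on the relation `≤` of `X`, as a function on all pairs; its values at pairs
with `¬x ≤ y` are arbitrary. -/
structure IsMultiplicative [LE X] [Mul M] [Zero M] (σ : X → X → M) : Prop where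
  ne_zero : ∀ x y, x ≤ y → σ x y ≠ 0
  trans : ∀ x y z, x ≤ y → y ≤ z → σ x z = σ x y * σ y z

theorem IsMultiplicative.mul [LE X] [CommMonoidWithZero M] [NoZeroDivisors M] {σ τ : X → X → M}
    (hσ : IsMultiplicative σ) (hτ : IsMultiplicative τ) : IsMultiplicative (σ * τ) where
  ne_zero x y h := mul_ne_zero (hσ.ne_zero x y h) (hτ.ne_zero x y h)
  trans x y z hxy hyz := by
    simp only [Pi.mul_apply, hσ.trans x y z hxy hyz, hτ.trans x y z hxy hyz]
    exact mul_mul_mul_comm ..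

/-- The fractional multiplicative map `(x, y) ↦ d(x) d(y)⁻¹` of a family of scalars `d`; its
multiplicative automorphism is conjugation by the diagonal element with entries `d`. -/
def fractional [Mul M] [Inv M] (d : X → M) (x y : X) : M :=
  d x * (d y)⁻¹

theorem isMultiplicative_fractional [LE X] [GroupWithZero M] {d : X → M} (hd : ∀ x, d x ≠ 0) :
    IsMultiplicative (fractional d) where
  ne_zero x y _ := mul_ne_zero (hd x) (inv_ne_zero (hd y))
  trans x y z _ _ := by
    simp only [fractional, mul_assoc, inv_mul_cancel_left₀ (hd y)]

end Multiplicative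

section Diagonal

variable {R X : Type*}

/-- The diagonal element of the incidence algebra with diagonal entries `d`. -/
def diagonal [Zero R] [Preorder X] [DecidableEq X] (d : X → R) : IncidenceAlgebra R X where
  toFun x y := if x = y then d x else 0
  eq_zero_of_not_le' _ _ h := if_neg fun hxy ↦ h hxy.le

theorem diagonal_apply [Zero R] [Preorder X] [DecidableEq X] (d : X → R) (x y : X) :
    diagonal d x y = if x = y then d x else 0 :=
  rfl

theorem diagonal_one [Zero R] [One R] [Preorder X] [DecidableEq X] :
    diagonal (1 : X → R) = 1 :=
  rfl

section Mul

variable [NonUnitalNonAssocSemiring R] [Preorder X] [DecidableEq X] [LocallyFiniteOrder X]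

theorem diagonal_mul_apply (d : X → R) (f : IncidenceAlgebra R X) (x y : X) :
    (diagonal d * f) x y = d x * f x y := by
  by_cases h : x ≤ y
  · simp [diagonal_apply, h]
  · simp [apply_eq_zero_of_not_le h]

theorem mul_diagonal_apply (f : IncidenceAlgebra R X) (d : X → R) (x y : X) :
    (f * diagonal d) x y = f x y * d y := by
  by_cases h : x ≤ y
  · simp [diagonal_apply, h]
  · simp [apply_eq_zero_of_not_le h]

theorem diagonal_mul_diagonal (d e : X → R) :
    (diagonal d * diagonal e : IncidenceAlgebra R X) = diagonal (d * e) := by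
  ext x y
  simp only [diagonal_mul_apply, diagonal_apply, mul_ite, mul_zero, Pi.mul_apply]

end Mul

/-- The ring homomorphism reading off the diagonal entry at `x`. -/
def applySelfHom [NonAssocSemiring R] [PartialOrder X] [DecidableEq X] [LocallyFiniteOrder X]
    (x : X) : IncidenceAlgebra R X →+* R where
  toFun f := f x x
  map_one' := if_pos rfl
  map_mul' f g := by rw [mul_apply, Finset.Icc_self, Finset.sum_singleton]
  map_zero' := rfl
  map_add' _ _ := rfl

theorem apply_self_ne_zero [Semiring R] [Nontrivial R] [PartialOrder X] [DecidableEq X]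
    [LocallyFiniteOrder X] {β : IncidenceAlgebra R X} (hβ : IsUnit β) (x : X) : β x x ≠ 0 :=
  (hβ.map (applySelfHom x)).ne_zero

section DivisionSemiring

variable [DivisionSemiring R] [Preorder X] [DecidableEq X] [LocallyFiniteOrder X] {d : X → R}

theorem diagonal_mul_diagonal_inv (hd : ∀ x, d x ≠ 0) :
    (diagonal d * diagonal d⁻¹ : IncidenceAlgebra R X) = 1 := by
  rw [diagonal_mul_diagonal, ← diagonal_one]
  exact congrArg diagonal (funext fun x ↦ mul_inv_cancel₀ (hd x))

theorem diagonal_inv_mul_diagonal (hd : ∀ x, d x ≠ 0) :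
    (diagonal d⁻¹ * diagonal d : IncidenceAlgebra R X) = 1 := by
  rw [diagonal_mul_diagonal, ← diagonal_one]
  exact congrArg diagonal (funext fun x ↦ inv_mul_cancel₀ (hd x))

theorem isUnit_diagonal (hd : ∀ x, d x ≠ 0) : IsUnit (diagonal d) :=
  ⟨⟨_, _, diagonal_mul_diagonal_inv hd, diagonal_inv_mul_diagonal hd⟩, rfl⟩

theorem inverse_diagonal (hd : ∀ x, d x ≠ 0) : Ring.inverse (diagonal d) = diagonal d⁻¹ :=
  Ring.inverse_unit ⟨_, _, diagonal_mul_diagonal_inv hd, diagonal_inv_mul_diagonal hd⟩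

end DivisionSemiring

end Diagonal

section UnipotentPart

variable {R X : Type*} [DivisionSemiring R] [PartialOrder X] [DecidableEq X] [LocallyFiniteOrder X]
  {β : IncidenceAlgebra R X}

/-- The factor `β' = β ε⁻¹` of a unit `β` with diagonal part `ε`. Writing `β = ε + ρ` with `ρ` in
the Jacobson radical, this is `δ + ρ ε⁻¹`. -/
def unipotentPart (β : IncidenceAlgebra R X) : IncidenceAlgebra R X :=
  β * diagonal fun x ↦ (β x x)⁻¹

theorem unipotentPart_apply (β : IncidenceAlgebra R X) (x y : X) :
    unipotentPart β x y = β x y * (β y y)⁻¹ :=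
  mul_diagonal_apply ..

theorem unipotentPart_apply_self (hβ : IsUnit β) (x : X) : unipotentPart β x x = 1 := by
  rw [unipotentPart_apply, mul_inv_cancel₀ (apply_self_ne_zero hβ x)]

theorem unipotentPart_mul_diagonal (hβ : IsUnit β) :
    unipotentPart β * diagonal (fun x ↦ β x x) = β := by
  ext x y
  rw [mul_diagonal_apply, unipotentPart_apply, inv_mul_cancel_right₀ (apply_self_ne_zero hβ y)]

theorem isUnit_unipotentPart (hβ : IsUnit β) : IsUnit (unipotentPart β) :=
  hβ.mul (isUnit_diagonal fun x ↦ inv_ne_zero (apply_self_ne_zero hβ x))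

end UnipotentPart

section Automorphisms

variable {K X : Type*} [Field K] [PartialOrder X]

theorem Mmul_apply (σ : X → X → K) (f : IncidenceAlgebra K X) (x y : X) :
    Mmul K σ f x y = σ x y * f x y :=
  rfl

theorem Mmul_Mmul (σ τ : X → X → K) (f : IncidenceAlgebra K X) :
    Mmul K σ (Mmul K τ f) = Mmul K (σ * τ) f := by
  ext x y
  simp only [Mmul_apply, Pi.mul_apply, mul_assoc]

variable [DecidableEq X] [LocallyFiniteOrder X]

theorem xiMap_mul {β γ : IncidenceAlgebra K X} (h : IsUnit β ∨ IsUnit γ)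
    (f : IncidenceAlgebra K X) : xiMap (β * γ) f = xiMap β (xiMap γ f) := by
  simp only [xiMap, Ring.inverse_mul h, mul_assoc]

theorem xiMap_diagonal {d : X → K} (hd : ∀ x, d x ≠ 0) (f : IncidenceAlgebra K X) :
    xiMap (diagonal d) f = Mmul K (fractional d) f := by
  ext x y
  rw [xiMap, inverse_diagonal hd, mul_diagonal_apply, diagonal_mul_apply, Mmul_apply, fractional,
    Pi.inv_apply, mul_right_comm]

theorem xiMap_Mmul_eq_xiMap_unipotentPart {β : IncidenceAlgebra K X} (hβ : IsUnit β)
    (σ : X → X → K) (f : IncidenceAlgebra K X) :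
    xiMap β (Mmul K σ f) =
      xiMap (unipotentPart β) (Mmul K (fractional (fun x ↦ β x x) * σ) f) :=
  calc xiMap β (Mmul K σ f)
      = xiMap (unipotentPart β * diagonal fun x ↦ β x x) (Mmul K σ f) := by
        rw [unipotentPart_mul_diagonal hβ]
    _ = xiMap (unipotentPart β) (xiMap (diagonal fun x ↦ β x x) (Mmul K σ f)) :=
        xiMap_mul (.inl (isUnit_unipotentPart hβ)) _
    _ = xiMap (unipotentPart β) (Mmul K (fractional (fun x ↦ β x x) * σ) f) := by
        rw [xiMap_diagonal (apply_self_ne_zero hβ), Mmul_Mmul]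

end Automorphisms

theorem stmt10_general {K : Type*} [Field K] {X : Type*} [PartialOrder X] [DecidableEq X]
    [LocallyFiniteOrder X]
    (β : IncidenceAlgebra K X) (hβ : IsUnit β)
    (σ : X → X → K)
    (hσ0 : ∀ x y : X, x ≤ y → σ x y ≠ 0)
    (hσm : ∀ x y z : X, x ≤ y → y ≤ z → σ x z = σ x y * σ y z) :
    ∃ (β' : IncidenceAlgebra K X) (σ' : X → X → K),
      IsUnit β' ∧ (∀ x : X, β' x x = 1) ∧
      (∀ x y : X, x < y → β' x y = β x y * (β y y)⁻¹) ∧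
      (∀ x y : X, x ≤ y → σ' x y ≠ 0) ∧
      (∀ x y z : X, x ≤ y → y ≤ z → σ' x z = σ' x y * σ' y z) ∧
      (∀ x y : X, x < y → σ' x y = β x x * (β y y)⁻¹ * σ x y) ∧
      ∀ f, xiMap β (Mmul K σ f) = xiMap β' (Mmul K σ' f) := by
  have hσ' : IsMultiplicative (fractional (fun x ↦ β x x) * σ) :=
    (isMultiplicative_fractional (apply_self_ne_zero hβ)).mul ⟨hσ0, hσm⟩
  exact ⟨unipotentPart β, fractional (fun x ↦ β x x) * σ, isUnit_unipotentPart hβ,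
    unipotentPart_apply_self hβ, fun x y _ ↦ unipotentPart_apply β x y, hσ'.ne_zero, hσ'.trans,
    fun _ _ _ ↦ rfl, xiMap_Mmul_eq_xiMap_unipotentPart hβ σ⟩

theorem stmt10 {K : Type*} [Field K] {X : Type*} [PartialOrder X] [Fintype X] [DecidableEq X]
    [LocallyFiniteOrder X]
    (hcard : 1 < Fintype.card X)
    (hconn : ∀ x y : X, Relation.ReflTransGen (fun a b : X => a ≤ b ∨ b ≤ a) x y)
    (hlen : ¬∃ x y z : X, x < y ∧ y < z)
    (β : IncidenceAlgebra K X) (hβ : IsUnit β)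
    (σ : X → X → K)
    (hσ0 : ∀ x y : X, x ≤ y → σ x y ≠ 0)
    (hσm : ∀ x y z : X, x ≤ y → y ≤ z → σ x z = σ x y * σ y z) :
    ∃ (β' : IncidenceAlgebra K X) (σ' : X → X → K),
      IsUnit β' ∧ (∀ x : X, β' x x = 1) ∧
      (∀ x y : X, x < y → β' x y = β x y * (β y y)⁻¹) ∧
      (∀ x y : X, x ≤ y → σ' x y ≠ 0) ∧
      (∀ x y z : X, x ≤ y → y ≤ z → σ' x z = σ' x y * σ' y z) ∧
      (∀ x y : X, x < y → σ' x y = β x x * (β y y)⁻¹ * σ x y) ∧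
      ∀ f, xiMap β (Mmul K σ f) = xiMap β' (Mmul K σ' f) :=
  stmt10_general β hβ σ hσ0 hσm
end
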